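/- For every constant ε > 0 there exist a constant c > 0 and a threshold k₀ such that the following holds for all integers k ≥ k₀ and U with U ≥ k^{1+ε}: there exists a set X of exactly k positive integers with X ⊆ {1, …, U} satisfying Σ_{x ∈ X} Σ_{y ∈ X} 1/H(x/y) ≥ k · exp( c · √( min( log k / log log k, log U / (log log U)² ) ) ). -/

import Mathlib

/-- The height of a nonzero rational `q = a/b` in lowest terms is `max |a| |b|`. -/
def ratHeight (q : ℚ) : ℕ := max q.num.natAbs q.den

lemma height_le (g a b : ℕ) (hg : 0 < g) (ha : 0 < a) (hb : 0 < b) :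
    ratHeight (((g * a : ℕ) : ℚ) / ((g * b : ℕ) : ℚ)) ≤ max a b := by
  have h : (((g * a : ℕ) : ℚ) / ((g * b : ℕ) : ℚ)) = Rat.divInt a b := by
    rw [Rat.divInt_eq_div]; push_cast
    have : (g:ℚ) ≠ 0 := by positivity
    have : (b:ℚ) ≠ 0 := by positivity
    field_simp
  rw [h]
  unfold ratHeight
  have h1 := Rat.num_dvd (a:ℤ) (b := (b:ℤ)) (by omega)
  have h2 := Rat.den_dvd (a:ℤ) (b:ℤ)
  have h3 := Int.le_of_dvd (by omega) h2
  have h4 : ((Rat.divInt a b).num.natAbs) ∣ a := by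
    have := Int.natAbs_dvd_natAbs.mpr h1
    simpa using this
  have h5 := Nat.le_of_dvd ha h4
  have h6 : (Rat.divInt a b).den ≤ b := by exact_mod_cast h3
  exact max_le_max h5 h6

lemma inv_height_ge (g a b B : ℕ) (hg : 0 < g) (ha : 0 < a) (hb : 0 < b) (hA : a ≤ B) (hB : b ≤ B) :
    (1:ℝ) / B ≤ 1 / (ratHeight (((g * a : ℕ) : ℚ) / ((g * b : ℕ) : ℚ)) : ℝ) := by
  have h := (height_le g a b hg ha hb).trans (max_le hA hB)
  have h0 : 0 < ratHeight (((g * a : ℕ) : ℚ) / ((g * b : ℕ) : ℚ)) := by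
    unfold ratHeight
    exact lt_of_lt_of_le (Rat.den_pos _) (le_max_right _ _)
  apply one_div_le_one_div_of_le
  · exact_mod_cast h0
  · exact_mod_cast h

lemma height_symm (x y : ℕ) (hx : 0 < x) (hy : 0 < y) :
    ratHeight ((x:ℚ)/(y:ℚ)) = ratHeight ((y:ℚ)/(x:ℚ)) := by
  unfold ratHeight
  rw [← inv_div (y:ℚ) (x:ℚ), Rat.num_inv, Rat.den_inv]
  have : (0:ℚ) < (y:ℚ)/x := by positivity
  have h1 := Rat.num_pos.mpr this
  rw [if_neg h1.ne', Int.sign_eq_one_of_pos h1]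
  simp [max_comm]

lemma row_bound (Q : Finset ℕ) (P r j n : ℕ) (hQ : ∀ p ∈ Q, p.Prime ∧ p ≤ P) (hn : Q.card = n)
    (A : Finset ℕ) (hA : A ∈ Q.powersetCard r) (hj : j ≤ r) :
    ((r.choose j : ℝ) * ((n - r).choose j)) * (1 / (P:ℝ)^j) ≤
      ∑ B ∈ Q.powersetCard r,
        (1:ℝ) / (ratHeight (((∏ p ∈ A, p : ℕ) : ℚ) / ((∏ p ∈ B, p : ℕ) : ℚ)) : ℝ) := by
  classical
  rw [Finset.mem_powersetCard] at hA
  obtain ⟨hAQ, hAr⟩ := hA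
  let D := A.powersetCard j ×ˢ (Q \ A).powersetCard j
  let φ : Finset ℕ × Finset ℕ → Finset ℕ := fun z => (A \ z.1) ∪ z.2
  have hD : ∀ z ∈ D, z.1 ⊆ A ∧ z.1.card = j ∧ z.2 ⊆ Q \ A ∧ z.2.card = j := by
    intro z hz
    simp only [D, Finset.mem_product, Finset.mem_powersetCard] at hz
    tauto
  have hinj : Set.InjOn φ D := by
    intro z hz w hw h
    obtain ⟨h1, h2, h3, h4⟩ := hD z hz
    obtain ⟨g1, g2, g3, g4⟩ := hD w hw
    simp only [φ, Finset.ext_iff, Finset.mem_union, Finset.mem_sdiff] at h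
    simp only [Finset.subset_iff, Finset.mem_sdiff] at h1 h3 g1 g3
    ext x
    · have := h x; have := @h1 x; have := @h3 x; have := @g1 x; have := @g3 x; tauto
    · have := h x; have := @h1 x; have := @h3 x; have := @g1 x; have := @g3 x; tauto
  have hmaps : D.image φ ⊆ Q.powersetCard r := by
    intro B hB
    obtain ⟨z, hz, rfl⟩ := Finset.mem_image.mp hB
    obtain ⟨h1, h2, h3, h4⟩ := hD z hz
    rw [Finset.mem_powersetCard]
    constructor
    · exact Finset.union_subset (Finset.sdiff_subset.trans hAQ) (h3.trans Finset.sdiff_subset)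
    · simp only [φ]
      rw [Finset.card_union_of_disjoint, Finset.card_sdiff_of_subset h1]
      · omega
      · rw [Finset.disjoint_left]
        intro x hx hx'
        exact (Finset.mem_sdiff.mp (h3 hx')).2 (Finset.mem_sdiff.mp hx).1
  have hcard : (D.card : ℝ) = (r.choose j : ℝ) * ((n - r).choose j) := by
    simp only [D, Finset.card_product, Finset.card_powersetCard]
    rw [Finset.card_sdiff_of_subset hAQ, hAr, hn]; push_cast; ring
  refine le_trans ?_ (Finset.sum_le_sum_of_subset_of_nonneg hmaps (fun _ _ _ => by positivity))
  rw [Finset.sum_image hinj, ← hcard, ← nsmul_eq_mul]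
  apply Finset.card_nsmul_le_sum
  intro z hz
  obtain ⟨h1, h2, h3, h4⟩ := hD z hz
  have pp : ∀ s : Finset ℕ, s ⊆ Q → 0 < ∏ p ∈ s, p := fun s hs =>
    Finset.prod_pos fun p hp => (hQ p (hs hp)).1.pos
  have pb : ∀ s : Finset ℕ, s ⊆ Q → s.card = j → ∏ p ∈ s, p ≤ P^j := fun s hs hc => by
    rw [← hc]; exact Finset.prod_le_pow_card _ _ _ fun p hp => (hQ p (hs hp)).2
  have e1 : ∏ p ∈ A, p = (∏ p ∈ A \ z.1, p) * ∏ p ∈ z.1, p := (Finset.prod_sdiff h1).symm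
  have e2 : ∏ p ∈ φ z, p = (∏ p ∈ A \ z.1, p) * ∏ p ∈ z.2, p := by
    simp only [φ]
    rw [Finset.prod_union]
    rw [Finset.disjoint_left]
    intro x hx hx'
    exact (Finset.mem_sdiff.mp (h3 hx')).2 (Finset.mem_sdiff.mp hx).1
  rw [e1, e2]
  have := inv_height_ge (∏ p ∈ A \ z.1, p) (∏ p ∈ z.1, p) (∏ p ∈ z.2, p) (P^j)
    (pp _ (Finset.sdiff_subset.trans hAQ)) (pp _ (h1.trans hAQ))
    (pp _ (h3.trans Finset.sdiff_subset)) (pb _ (h1.trans hAQ) h2)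
    (pb _ (h3.trans Finset.sdiff_subset) h4)
  exact_mod_cast this

lemma greedy (f : ℕ → ℕ → ℝ) (k : ℕ) (hk : 1 ≤ k) (hf : ∀ x y, 0 ≤ f x y) :
    ∀ m : ℕ, ∀ X : Finset ℕ, X.card = k + m → (∀ x ∈ X, ∀ y ∈ X, f x y = f y x) →
    ∃ Y ⊆ X, Y.card = k ∧ (∑ x ∈ X, ∑ y ∈ X, f x y) * (k * (k - 1)) ≤
      (∑ x ∈ Y, ∑ y ∈ Y, f x y) * (X.card * (X.card - 1)) := by
  intro m
  induction m with
  | zero => intro X hX _; exact ⟨X, subset_rfl, by simpa using hX, by rw [hX]; simp⟩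
  | succ m ih =>
    intro X hX hs
    have hne : X.Nonempty := Finset.card_pos.mp (by omega)
    obtain ⟨v, hv, hmin⟩ := Finset.exists_min_image X (fun x => ∑ y ∈ X, f x y) hne
    have hav : (X.card : ℝ) * (∑ y ∈ X, f v y) ≤ ∑ x ∈ X, ∑ y ∈ X, f x y := by
      rw [← nsmul_eq_mul]; exact Finset.card_nsmul_le_sum _ _ _ hmin
    have hc : (X.erase v).card = k + m := by rw [Finset.card_erase_of_mem hv]; omega
    obtain ⟨Y, hY, hYk, hYs⟩ := ih (X.erase v) hc
      (fun x hx y hy => hs x (Finset.mem_of_mem_erase hx) y (Finset.mem_of_mem_erase hy))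
    refine ⟨Y, hY.trans (Finset.erase_subset _ _), hYk, ?_⟩
    have hsum : ∑ x ∈ X, ∑ y ∈ X, f x y =
        (∑ x ∈ X.erase v, ∑ y ∈ X.erase v, f x y) + 2 * (∑ y ∈ X, f v y) - f v v := by
      rw [← Finset.sum_erase_add _ _ hv]
      have : ∀ x ∈ X.erase v, ∑ y ∈ X, f x y = ∑ y ∈ X.erase v, f x y + f v x := by
        intro x hx
        rw [← Finset.sum_erase_add _ _ hv, hs x (Finset.mem_of_mem_erase hx) v hv]
      rw [Finset.sum_congr rfl this, Finset.sum_add_distrib]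
      have := Finset.sum_erase_add X (fun y => f v y) hv
      linarith
    set S := ∑ x ∈ X, ∑ y ∈ X, f x y
    set S' := ∑ x ∈ X.erase v, ∑ y ∈ X.erase v, f x y
    set T := ∑ x ∈ Y, ∑ y ∈ Y, f x y
    rw [hc] at hYs
    rw [hX] at hav ⊢
    push_cast at hav hYs ⊢
    have hk' : (1:ℝ) ≤ k := by exact_mod_cast hk
    have hm : (0:ℝ) ≤ m := by positivity
    have hvv := hf v v
    -- S (N-2) ≤ N S'
    have h1 : S * ((k:ℝ) + m - 1) ≤ ((k:ℝ) + (m+1)) * S' := by nlinarith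
    have hT : 0 ≤ T := Finset.sum_nonneg fun x _ => Finset.sum_nonneg fun y _ => hf x y
    have hS : 0 ≤ S := Finset.sum_nonneg fun x _ => Finset.sum_nonneg fun y _ => hf x y
    rcases eq_or_lt_of_le (show (0:ℝ) ≤ (k:ℝ) + m - 1 by linarith) with h0 | h0
    · have : (k:ℝ) = 1 := by linarith
      rw [this]; simp; positivity
    · have h2 : S * (k * (k-1)) * ((k:ℝ) + m - 1) ≤ T * ((k + (m+1)) * (k + (m+1) - 1)) * ((k:ℝ) + m - 1) := by
        have a1 := mul_le_mul_of_nonneg_right h1 (show (0:ℝ) ≤ k * (k-1) by nlinarith)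
        have a2 := mul_le_mul_of_nonneg_left hYs (show (0:ℝ) ≤ (k:ℝ) + (m+1) by linarith)
        nlinarith
      exact le_of_mul_le_mul_right h2 h0

lemma pow_le_choose_aux : ∀ r n : ℕ, r ≤ n → n ^ r ≤ r ^ r * n.choose r := by
  intro r
  induction r with
  | zero => intro n _; simp
  | succ r ih =>
    intro n hn
    obtain ⟨n, rfl⟩ : ∃ m, n = m + 1 := ⟨n - 1, by omega⟩
    have hrn : r ≤ n := by omega
    have h1 := ih n hrn
    have h2 : (n+1)^r ≤ (r+1)^r * n.choose r := by
      rcases Nat.eq_zero_or_pos r with rfl | hr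
      · simp
      · have h3 : ((n+1) * r)^r ≤ ((r+1) * n)^r := Nat.pow_le_pow_left (by nlinarith) r
        rw [mul_pow, mul_pow] at h3
        have h4 : 0 < r^r := by positivity
        have h5 := Nat.mul_le_mul_left ((r+1)^r) h1
        refine Nat.le_of_mul_le_mul_right (c := r^r) ?_ h4
        nlinarith
    have h6 := Nat.add_one_mul_choose_eq n r
    calc (n+1)^(r+1) = (n+1) * (n+1)^r := by ring
      _ ≤ (n+1) * ((r+1)^r * n.choose r) := Nat.mul_le_mul_left _ h2
      _ = (r+1)^r * ((n+1) * n.choose r) := by ring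
      _ = (r+1)^(r+1) * (n+1).choose (r+1) := by rw [h6]; ring

lemma cheb (t : ℕ) : 2 ^ t ≤ t * Nat.primeCounting (2 ^ t) + t + 1 := by
  rcases Nat.eq_zero_or_pos t with rfl | ht
  · simp
  have h := Chebyshev.pi_ge (2^t)
  have hl2 : 0 < Real.log 2 := Real.log_pos (by norm_num)
  have ht' : (0:ℝ) < t := by exact_mod_cast ht
  push_cast at h
  rw [Real.log_pow, div_le_iff₀ (by positivity)] at h
  have h2 : Real.log ((2:ℝ)^t + 1) ≤ (t+1) * Real.log 2 := by
    have : (2:ℝ)^t + 1 ≤ 2^(t+1) := by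
      have : (1:ℝ) ≤ 2^t := one_le_pow₀ (by norm_num)
      rw [pow_succ]; linarith
    have h3 := Real.log_le_log (by positivity) this
    rw [Real.log_pow] at h3
    exact_mod_cast h3
  have h3 : ((2:ℝ)^t) * Real.log 2 ≤ (t * Nat.primeCounting (2 ^ t) + t + 1) * Real.log 2 := by nlinarith
  have h4 := le_of_mul_le_mul_right h3 hl2
  exact_mod_cast h4

lemma exists_t (n : ℕ) (hn : 1 ≤ n) : ∃ t, 1 ≤ t ∧ n ≤ Nat.primeCounting (2^t) ∧ 2^t ≤ 2 * t * n := by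
  classical
  have hex : ∃ t, n ≤ Nat.primeCounting (2^t) := by
    obtain ⟨s, hs⟩ := (Filter.tendsto_atTop.mp Nat.tendsto_primeCounting n).exists
    exact ⟨s, hs.trans (Nat.monotone_primeCounting (Nat.lt_two_pow_self).le)⟩
  have hs := Nat.find_spec hex
  have hm := fun m => Nat.find_min hex (m := m)
  set t := Nat.find hex
  have ht : 1 ≤ t := by
    by_contra h
    have : t = 0 := by omega
    rw [this] at hs
    simp at hs
    omega
  refine ⟨t, ht, hs, ?_⟩
  obtain ⟨s, hst⟩ : ∃ s, t = s + 1 := ⟨t - 1, by omega⟩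
  rw [hst]
  have h1 := hm s (by omega)
  have h2 := cheb s
  have h3 : s * Nat.primeCounting (2^s) ≤ s * (n - 1) := Nat.mul_le_mul_left _ (by omega)
  obtain ⟨m, rfl⟩ : ∃ m, n = m + 1 := ⟨n - 1, by omega⟩
  simp at h3
  rw [pow_succ]
  nlinarith

lemma comb (k r : ℕ) (hr : 1 ≤ r) (hk : 4 ^ r ≤ k) : ∃ n t : ℕ, 1 ≤ t ∧ 2 * r ≤ n ∧
    n ^ r ≤ (2 * r) ^ r * k ∧ 2 ^ t ≤ 2 * t * n ∧ ∀ U : ℕ, (2 ^ t) ^ r ≤ U →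
    ∀ j : ℕ, 1 ≤ j → 16 * t * j ^ 2 ≤ r → ∃ X : Finset ℕ, X ⊆ Finset.Icc 1 U ∧ X.card = k ∧
      (k : ℝ) * (4 ^ j / 2) ≤ 
        ∑ x ∈ X, ∑ y ∈ X, (1 : ℝ) / (ratHeight ((x : ℚ) / (y : ℚ)) : ℝ) := by
  classical
  have hk4 : 4 ≤ k := le_trans (by simpa using Nat.pow_le_pow_right (n := 4) (by norm_num) hr) hk
  have hex : ∃ n : ℕ, k ≤ n.choose r := by
    refine ⟨k * r, ?_⟩
    have := pow_le_choose_aux r (k*r) (by nlinarith)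
    rw [mul_pow, mul_comm] at this
    have h2 := Nat.le_of_mul_le_mul_left this (by positivity)
    exact (Nat.le_self_pow (by omega) k).trans h2
  have hs := Nat.find_spec hex
  have hm := fun m => Nat.find_min hex (m := m)
  set n := Nat.find hex
  have hn2 : 2 * r ≤ n := by
    by_contra h
    have h1 : n.choose r ≤ (2 * r - 1).choose r := Nat.choose_le_choose r (by omega)
    have h2 : (2 * r - 1).choose r ≤ 2 ^ (2 * r - 1) := Nat.choose_le_two_pow _ _
    have h3 : 2 ^ (2 * r - 1) < 2 ^ (2 * r) := Nat.pow_lt_pow_right (by norm_num) (by omega)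
    rw [pow_mul] at h3
    norm_num at h3
    omega
  obtain ⟨m, hmn⟩ : ∃ m, n = m + 1 := ⟨n - 1, by omega⟩
  have hmk : m.choose r < k := by have := hm m (by omega); omega
  obtain ⟨t, ht1, htn, ht2⟩ := exists_t n (by omega)
  refine ⟨n, t, ht1, hn2, ?_, ht2, ?_⟩
  · have h1 := pow_le_choose_aux r m (by omega)
    calc n ^ r ≤ (2 * m) ^ r := Nat.pow_le_pow_left (by omega) r
      _ = 2 ^ r * m ^ r := by rw [mul_pow]
      _ ≤ 2 ^ r * (r ^ r * k) := Nat.mul_le_mul_left _ (h1.trans (Nat.mul_le_mul_left _ hmk.le))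
      _ = _ := by rw [mul_pow]; ring
  intro U hU j hj hjr
  have hN : n.choose r < 2 * k - 1 := by
    have h1 := Nat.choose_mul_succ_eq m r
    rw [← hmn] at h1
    have h2 : n.choose r * n ≤ (2 * m.choose r) * n := by
      have : n ≤ 2 * (n - r) := by omega
      calc n.choose r * n ≤ n.choose r * (2 * (n - r)) := Nat.mul_le_mul_left _ this
        _ = 2 * (n.choose r * (n - r)) := by ring
        _ = _ := by rw [← h1]; ring
    have h3 := Nat.le_of_mul_le_mul_right h2 (by omega)
    omega
  obtain ⟨Q, hQsub, hQc⟩ : ∃ Q ⊆ (Finset.range (2^t+1)).filter Nat.Prime, Q.card = n := by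
    apply Finset.exists_subset_card_eq
    rw [← Nat.count_eq_card_filter_range]
    exact htn
  have hQ : ∀ p ∈ Q, p.Prime ∧ p ≤ 2^t := by
    intro p hp
    have := hQsub hp
    rw [Finset.mem_filter, Finset.mem_range] at this
    exact ⟨this.2, by omega⟩
  have hjr' : j ≤ r := by nlinarith
  let g : Finset ℕ → ℕ := fun A => ∏ p ∈ A, p
  have hginj : Set.InjOn g (Q.powersetCard r) := by
    intro A hA B hB h
    have hA' := (Finset.mem_powersetCard.mp hA).1
    have hB' := (Finset.mem_powersetCard.mp hB).1
    have h1 := Nat.primeFactors_prod (s := A) fun p hp => (hQ p (hA' hp)).1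
    have h2 := Nat.primeFactors_prod (s := B) fun p hp => (hQ p (hB' hp)).1
    rw [← h1, ← h2]; simp only [g] at h; rw [h]
  let Z := (Q.powersetCard r).image g
  have hZc : Z.card = n.choose r := by
    rw [Finset.card_image_of_injOn hginj, Finset.card_powersetCard, hQc]
  have hZU : Z ⊆ Finset.Icc 1 U := by
    intro x hx
    obtain ⟨A, hA, rfl⟩ := Finset.mem_image.mp hx
    obtain ⟨hA1, hA2⟩ := Finset.mem_powersetCard.mp hA
    rw [Finset.mem_Icc]
    constructor
    · exact Finset.prod_pos fun p hp => (hQ p (hA1 hp)).1.pos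
    · refine le_trans ?_ hU
      rw [← hA2]; exact Finset.prod_le_pow_card _ _ _ fun p hp => (hQ p (hA1 hp)).2
  let f : ℕ → ℕ → ℝ := fun x y => (1 : ℝ) / (ratHeight ((x : ℚ) / (y : ℚ)) : ℝ)
  have hE : (4:ℝ)^j ≤ ((r.choose j : ℝ) * ((n - r).choose j)) * (1 / ((2^t : ℕ):ℝ)^j) := by
    have h1 := pow_le_choose_aux j r hjr'
    have h2 := pow_le_choose_aux j (n - r) (by omega)
    have h3 : 4 * 2^t * j^2 ≤ r * (n - r) := by
      have : n ≤ 2 * (n - r) := by omega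
      have a : 2 * (4 * 2^t * j^2) ≤ 2 * (r * (n - r)) := by
        calc 2 * (4 * 2^t * j^2) ≤ 2 * (4 * (2 * t * n) * j^2) := by gcongr
          _ = (16 * t * j^2) * n := by ring
          _ ≤ r * (2 * (n-r)) := Nat.mul_le_mul hjr this
          _ = _ := by ring
      omega
    have h4 : (4 * 2^t * j^2)^j ≤ (j^2)^j * (r.choose j * (n-r).choose j) := by
      calc (4 * 2^t * j^2)^j ≤ (r * (n-r))^j := Nat.pow_le_pow_left h3 j
        _ = r^j * (n-r)^j := mul_pow _ _ _
        _ ≤ (j^j * r.choose j) * (j^j * (n-r).choose j) := Nat.mul_le_mul h1 h2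
        _ = _ := by rw [pow_two, mul_pow]; ring
    rw [mul_pow, mul_comm] at h4
    have h5 := Nat.le_of_mul_le_mul_left h4 (by positivity)
    rw [mul_one_div, le_div_iff₀ (by positivity)]
    rw [mul_pow] at h5
    exact_mod_cast h5
  have hS : (n.choose r : ℝ) * 4^j ≤ ∑ x ∈ Z, ∑ y ∈ Z, f x y := by
    rw [← hZc, ← nsmul_eq_mul]
    apply Finset.card_nsmul_le_sum
    intro x hx
    obtain ⟨A, hA, rfl⟩ := Finset.mem_image.mp hx
    simp only [Z]
    rw [Finset.sum_image hginj]
    exact hE.trans (row_bound Q (2^t) r j n hQ hQc A hA hjr')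
  obtain ⟨Y, hYZ, hYk, hY⟩ := greedy f k (by omega) (fun x y => by positivity) (Z.card - k) Z
    (by omega) (fun x hx y hy => by
      have hx' := Finset.mem_Icc.mp (hZU hx)
      have hy' := Finset.mem_Icc.mp (hZU hy)
      simp only [f]; rw [height_symm x y (by omega) (by omega)])
  refine ⟨Y, hYZ.trans hZU, hYk, ?_⟩
  change _ ≤ ∑ x ∈ Y, ∑ y ∈ Y, f x y
  set T := ∑ x ∈ Y, ∑ y ∈ Y, f x y
  have hT : 0 ≤ T := Finset.sum_nonneg fun x _ => Finset.sum_nonneg fun y _ => by positivity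
  rw [hZc] at hY
  have hkR : (4:ℝ) ≤ k := by exact_mod_cast hk4
  have hNR : (n.choose r : ℝ) ≤ 2 * k - 1 := by
    have : n.choose r + 1 ≤ 2 * k := by omega
    have : (n.choose r : ℝ) + 1 ≤ 2 * k := by exact_mod_cast this
    linarith
  have hNk : (k:ℝ) ≤ n.choose r := by exact_mod_cast hs
  set N : ℝ := (n.choose r : ℝ)
  have h1 : N * 4^j * (k * (k-1)) ≤ T * (N * (N-1)) :=
    (mul_le_mul_of_nonneg_right hS (by nlinarith)).trans hY
  have h2 : (4^j * k) * (k-1) ≤ T * (N-1) := by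
    refine le_of_mul_le_mul_left (a := N) ?_ (by linarith)
    linarith
  have h3 : T * (N-1) ≤ T * (2 * (k-1)) := mul_le_mul_of_nonneg_left (by linarith) hT
  have h4 : (4^j * k) * (k-1) ≤ (2 * T) * ((k:ℝ)-1) := by linarith
  have h5 := le_of_mul_le_mul_right h4 (by linarith)
  linarith

lemma t_bound (n t : ℕ) (hn : 1 ≤ n) (h : 2 ^ t ≤ 2 * t * n) : (t:ℝ) ≤ 4 + 2 * Real.logb 2 n := by
  have h1 : 2 ^ t ≤ 16 * n ^ 2 := by
    by_cases ht : 4 ≤ t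
    · have h2 : t ^ 2 ≤ 2 ^ t := by
        induction t, ht using Nat.le_induction with
        | base => norm_num
        | succ m hm ih =>
          have : ∀ m : ℕ, 4 ≤ m → m ^ 2 ≤ 2 ^ m := by
            intro m hm
            induction m, hm using Nat.le_induction with
            | base => norm_num
            | succ m hm ih => rw [pow_succ 2]; nlinarith
          exact this (m+1) (by omega)
      have h3 : 2 ^ t * 2 ^ t ≤ 2 ^ t * (4 * n^2) := by
        calc 2 ^ t * 2 ^ t ≤ (2 * t * n) * (2 * t * n) := Nat.mul_le_mul h h
          _ = t^2 * (4 * n^2) := by ring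
          _ ≤ _ := Nat.mul_le_mul_right _ h2
      have := Nat.le_of_mul_le_mul_left h3 (by positivity)
      nlinarith
    · have : 2 ^ t ≤ 2 ^ 3 := Nat.pow_le_pow_right (by norm_num) (by omega)
      nlinarith
  have h2 : ((2:ℝ)^t) ≤ 2^4 * (n:ℝ)^2 := by
    have : ((2^t : ℕ):ℝ) ≤ ((16 * n^2 : ℕ) : ℝ) := by exact_mod_cast h1
    push_cast at this; linarith
  have hn' : (0:ℝ) < n := by exact_mod_cast hn
  have h3 := Real.logb_le_logb_of_le (b := 2) (by norm_num) (by positivity) h2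
  rw [Real.logb_mul (by positivity) (by positivity), Real.logb_pow, Real.logb_pow, Real.logb_pow,
    Real.logb_self_eq_one (by norm_num)] at h3
  push_cast at h3
  linarith

lemma growth (M0 : ℝ) : ∃ x0 : ℝ, ∀ x, x0 ≤ x → M0 ≤ x / (Real.logb 2 x)^2 := by
  have h : (fun x : ℝ => Real.log x ^ 2) =o[Filter.atTop] (id : ℝ → ℝ) := Real.isLittleO_pow_log_id_atTop
  have hl2 : 0 < Real.log 2 := Real.log_pos (by norm_num)
  set M := max M0 1
  have hM : 0 < M := lt_of_lt_of_le one_pos (le_max_right _ _)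
  have h1 := h.def (c := (Real.log 2)^2 / M) (by positivity)
  obtain ⟨x1, hx1⟩ := Filter.eventually_atTop.mp h1
  refine ⟨max x1 2, fun x hx => (le_max_left M0 1).trans ?_⟩
  have h2 := hx1 x ((le_max_left _ _).trans hx)
  have hx2 : 2 ≤ x := (le_max_right _ _).trans hx
  have hlx : 0 < Real.log x := Real.log_pos (by linarith)
  simp only [id, Real.norm_eq_abs] at h2
  rw [abs_of_nonneg (by positivity), abs_of_nonneg (by linarith)] at h2
  unfold Real.logb
  rw [le_div_iff₀ (by positivity), div_pow, mul_div_assoc', div_le_iff₀ (by positivity)]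
  have h3 := mul_le_mul_of_nonneg_left h2 hM.le
  have : M * (Real.log 2 ^ 2 / M * x) = x * Real.log 2 ^ 2 := by field_simp
  linarith

lemma logb_le_self' (x : ℝ) (hx : 1 ≤ x) : Real.logb 2 x ≤ x := by
  rw [Real.logb_le_iff_le_rpow (by norm_num) (by linarith)]
  have := one_add_mul_self_le_rpow_one_add (s := 1) (by norm_num) hx
  norm_num at this
  linarith

set_option maxHeartbeats 2000000 in
theorem stmt_16 : ∀ ε : ℝ, 0 < ε → ∃ c : ℝ, 0 < c ∧ ∃ k₀ : ℕ, ∀ k : ℕ, k₀ ≤ k →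
    ∀ U : ℕ, (k : ℝ) ^ ((1 : ℝ) + ε) ≤ U →
    ∃ X : Finset ℕ, X ⊆ Finset.Icc 1 U ∧ X.card = k ∧
      (k : ℝ) * Real.exp (c * Real.sqrt (min
          (Real.logb 2 k / Real.logb 2 (Real.logb 2 k))
          (Real.logb 2 U / (Real.logb 2 (Real.logb 2 U)) ^ 2)))
      ≤ ∑ x ∈ X, ∑ y ∈ X, (1 : ℝ) / (ratHeight ((x : ℚ) / (y : ℚ)) : ℝ) := by
  intro ε hε
  obtain ⟨δ, hδ⟩ : ∃ δ, δ = ε / (1 + ε) := ⟨_, rfl⟩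
  have hδ0 : 0 < δ := by rw [hδ]; positivity
  have hδ1 : δ < 1 := by rw [hδ, div_lt_one (by positivity)]; linarith
  obtain ⟨c1, hc1⟩ : ∃ c1, c1 = δ / 3 := ⟨_, rfl⟩
  have hc10 : 0 < c1 := by linarith
  obtain ⟨D, hD⟩ : ∃ D, D = 3 + 4 / c1 := ⟨_, rfl⟩
  have hD0 : 0 < D := by rw [hD]; positivity
  obtain ⟨c2, hc2⟩ : ∃ c2, c2 = c1 / (2 * D) := ⟨_, rfl⟩
  have hc20 : 0 < c2 := by rw [hc2]; positivity
  have hl2 : 0 < Real.log 2 := Real.log_pos (by norm_num)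
  refine ⟨Real.log 2 * Real.sqrt (c2 / 64), by positivity, ?_⟩
  obtain ⟨x0, hx0⟩ := growth (max (64 / c2) (1 / c1))
  have hten : Filter.Tendsto (fun k : ℕ => Real.logb 2 (k:ℝ)) Filter.atTop Filter.atTop :=
    (Real.tendsto_logb_atTop (by norm_num)).comp tendsto_natCast_atTop_atTop
  obtain ⟨k₀, hk₀⟩ := Filter.eventually_atTop.mp (Filter.tendsto_atTop.mp hten (max x0 64))
  refine ⟨max k₀ 2, fun k hk U hU => ?_⟩
  have hk2 : 2 ≤ k := (le_max_right _ _).trans hk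
  have hkK := hk₀ k ((le_max_left _ _).trans hk)
  have hk0 : (0:ℝ) < k := by exact_mod_cast (show 0 < k by omega)
  obtain ⟨K, hK⟩ : ∃ K, K = Real.logb 2 k := ⟨_, rfl⟩
  obtain ⟨L, hL⟩ : ∃ L, L = Real.logb 2 U := ⟨_, rfl⟩
  rw [← hK] at hkK
  have hK64 : 64 ≤ K := (le_max_right _ _).trans hkK
  have hU0 : (0:ℝ) < U := lt_of_lt_of_le (by positivity) hU
  have hLK : (1 + ε) * K ≤ L := by
    have := Real.logb_le_logb_of_le (b := 2) (by norm_num) (by positivity) hU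
    rw [Real.logb_rpow_eq_mul_logb_of_pos hk0] at this
    rw [hK, hL]; exact this
  have hKL : K ≤ L := by nlinarith
  have hdiff : K + δ * L ≤ L := by
    have : (1 - δ) * L ≥ K := by
      have h1 : 1 - δ = 1 / (1 + ε) := by rw [hδ]; field_simp; ring
      rw [h1, ge_iff_le, one_div, ← div_eq_inv_mul, le_div_iff₀ (by positivity)]; linarith
    linarith
  have hlog : ∀ x : ℝ, 64 ≤ x → 6 ≤ Real.logb 2 x := by
    intro x hx
    rw [Real.le_logb_iff_rpow_le (by norm_num) (by linarith)]
    norm_num; exact hx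
  obtain ⟨lK, hlK⟩ : ∃ lK, lK = Real.logb 2 K := ⟨_, rfl⟩
  obtain ⟨lL, hlL⟩ : ∃ lL, lL = Real.logb 2 L := ⟨_, rfl⟩
  have hlK6 : 6 ≤ lK := hlK ▸ hlog K hK64
  have hlL6 : 6 ≤ lL := hlL ▸ hlog L (by linarith)
  have hgK := hx0 K ((le_max_left _ _).trans hkK)
  have hgL := hx0 L (((le_max_left _ _).trans hkK).trans hKL)
  rw [← hK, ← hL, ← hlK, ← hlL]
  rw [← hlK] at hgK
  rw [← hlL] at hgL
  obtain ⟨M, hM⟩ : ∃ M, M = min (K / lK) (L / lL ^ 2) := ⟨_, rfl⟩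
  rw [← hM]
  have hMbig : max (64 / c2) (1 / c1) ≤ M := by
    rw [hM]
    refine le_min (hgK.trans ?_) hgL
    apply div_le_div_of_nonneg_left (by linarith) (by linarith); nlinarith
  have hM1 : 64 / c2 ≤ M := (le_max_left _ _).trans hMbig
  have hM2 : 1 / c1 ≤ M := (le_max_right _ _).trans hMbig
  obtain ⟨s, hs⟩ : ∃ s, s = min K (L / lL) := ⟨_, rfl⟩
  -- key comparison quantity
  have hM0 : 0 < M := lt_of_lt_of_le (by positivity) hM1
  have hL0 : 0 < L := by linarith
  obtain ⟨l, hl6, hsl, hKs, hls⟩ : ∃ l : ℝ, 6 ≤ l ∧ M ≤ s / l ∧ K ≤ s * l ∧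
      Real.logb 2 s ≤ l := by
    rcases le_total K (L / lL) with h | h
    · have hsK : s = K := by rw [hs, min_eq_left h]
      refine ⟨lK, hlK6, ?_, ?_, ?_⟩
      · rw [hsK, hM]; exact min_le_left _ _
      · rw [hsK]; nlinarith
      · rw [hsK, hlK]
    · have hsK : s = L / lL := by rw [hs, min_eq_right h]
      refine ⟨lL, hlL6, ?_, ?_, ?_⟩
      · rw [hsK, hM, div_div, ← pow_two]; exact min_le_right _ _
      · rw [hsK, div_mul_cancel₀ _ (by linarith)]; exact hKL
      · rw [hsK, hlL]
        rw [← hlL]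
        rw [hlL]
        apply Real.logb_le_logb_of_le (by norm_num)
        · rw [← hlL]; positivity
        · rw [← hlL]; exact div_le_self hL0.le (by linarith)
  have hsM : M ≤ s := by
    have hs0 : 0 < s := by
      by_contra h
      have := div_nonpos_of_nonpos_of_nonneg (not_lt.mp h) (show 0 ≤ l by linarith)
      linarith
    exact hsl.trans (div_le_self hs0.le (by linarith))
  have hs0 : 0 < s := by linarith
  have hsK : s ≤ K := by rw [hs]; exact min_le_left _ _
  have hsL : s ≤ L / lL := by rw [hs]; exact min_le_right _ _
  have hcs : 1 ≤ c1 * s := by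
    have := hM2.trans hsM
    rw [div_le_iff₀ hc10] at this; linarith
  obtain ⟨r, hr⟩ : ∃ r : ℕ, r = ⌊c1 * s⌋₊ := ⟨_, rfl⟩
  have hr1 : 1 ≤ r := by rw [hr]; exact Nat.le_floor (by exact_mod_cast hcs)
  have hr1' : (1:ℝ) ≤ r := by exact_mod_cast hr1
  have hrle : (r:ℝ) ≤ c1 * s := by rw [hr]; exact Nat.floor_le (by positivity)
  have hrge : c1 * s / 2 ≤ r := by
    have := Nat.lt_floor_add_one (c1 * s)
    rw [← hr] at this
    linarith
  have hrs : (r:ℝ) ≤ s / 3 := by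
    have : c1 * s ≤ (1/3) * s := mul_le_mul_of_nonneg_right (by linarith) hs0.le
    linarith
  have h4r : 4 ^ r ≤ k := by
    have h1 : ((2 * r : ℕ):ℝ) ≤ Real.logb 2 k := by push_cast; rw [← hK]; linarith
    rw [Real.le_logb_iff_rpow_le (by norm_num) hk0, Real.rpow_natCast, pow_mul] at h1
    norm_num at h1
    exact_mod_cast h1
  obtain ⟨n, t, ht1, hn2, hnr, ht2, hX⟩ := comb k r hr1 h4r
  have hn1 : 1 ≤ n := by omega
  have hn0 : (0:ℝ) < n := by exact_mod_cast hn1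
  have ht0 : (1:ℝ) ≤ t := by exact_mod_cast ht1
  have htb := t_bound n t hn1 ht2
  have hnb : r * Real.logb 2 n ≤ r * (1 + Real.logb 2 r) + K := by
    have h1 : (n:ℝ) ^ r ≤ (2 * r) ^ r * k := by exact_mod_cast hnr
    have h2 := Real.logb_le_logb_of_le (b := 2) (by norm_num) (by positivity) h1
    rw [Real.logb_mul (by positivity) (by positivity), Real.logb_pow, Real.logb_pow,
      Real.logb_mul (by positivity) (by positivity), Real.logb_self_eq_one (by norm_num), ← hK] at h2
    exact h2
  have hnb' : Real.logb 2 n ≤ 1 + Real.logb 2 r + K / r := by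
    refine le_of_mul_le_mul_left (a := (r:ℝ)) ?_ (by linarith)
    rw [mul_add _ _ (K / r), mul_div_cancel₀ _ (by linarith)]
    exact hnb
  have hlogr_s : Real.logb 2 r ≤ Real.logb 2 s :=
    Real.logb_le_logb_of_le (by norm_num) (by linarith) (by linarith)
  have htl : (t:ℝ) ≤ D * l := by
    have h1 : K / r ≤ 2 / c1 * l := by
      rw [div_le_iff₀ (by linarith)]
      calc K ≤ s * l := hKs
        _ = 2 / c1 * l * (c1 * s / 2) := by field_simp
        _ ≤ _ := mul_le_mul_of_nonneg_left hrge (by positivity)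
    have h2 : D * l = 3 * l + 2 * (2 / c1 * l) := by rw [hD]; ring
    linarith
  have htL : (t:ℝ) ≤ 8 * L := by
    have h1 : K / r ≤ K := div_le_self (by linarith) hr1'
    have h2 := logb_le_self' r hr1'
    linarith
  have hUt : (2 ^ t) ^ r ≤ U := by
    have h1 : (2:ℝ) ^ t ≤ 2 * t * n := by exact_mod_cast ht2
    have h2 := Real.logb_le_logb_of_le (b := 2) (by norm_num) (by positivity) h1
    rw [Real.logb_mul (by positivity) (by positivity), Real.logb_pow,
      Real.logb_mul (by positivity) (by positivity), Real.logb_self_eq_one (by norm_num)] at h2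
    have h3 : Real.logb 2 t ≤ 3 + lL := by
      have := Real.logb_le_logb_of_le (b := 2) (by norm_num) (by linarith) htL
      rw [Real.logb_mul (by norm_num) (by linarith), ← hlL] at this
      have h8 : Real.logb 2 8 = 3 := by
        rw [show (8:ℝ) = 2 ^ 3 by norm_num, Real.logb_pow, Real.logb_self_eq_one (by norm_num)]
        norm_num
      linarith
    have h4 : Real.logb 2 r ≤ lL := by
      rw [hlL]; exact Real.logb_le_logb_of_le (by norm_num) (by linarith) (by linarith)
    have h5 : (r:ℝ) * (3 * lL) ≤ δ * L := by
      calc (r:ℝ) * (3 * lL) ≤ (c1 * (L / lL)) * (3 * lL) := by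
            apply mul_le_mul_of_nonneg_right _ (by linarith)
            exact hrle.trans (mul_le_mul_of_nonneg_left hsL hc10.le)
        _ = δ * L := by rw [hc1]; field_simp
    have h6 : (r:ℝ) * t ≤ r * (1 + Real.logb 2 t) + r * Real.logb 2 n := by
      rw [← mul_add]; apply mul_le_mul_of_nonneg_left _ (by linarith); linarith
    have h7 : (r:ℝ) * (1 + Real.logb 2 t) + r * (1 + Real.logb 2 r) ≤ r * (3 * lL) := by
      rw [← mul_add]; apply mul_le_mul_of_nonneg_left _ (by linarith); linarith
    have h8 : ((t * r : ℕ):ℝ) ≤ Real.logb 2 U := by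
      push_cast; rw [← hL]; linarith
    rw [Real.le_logb_iff_rpow_le (by norm_num) hU0, Real.rpow_natCast, pow_mul] at h8
    exact_mod_cast h8
  obtain ⟨w, hw⟩ : ∃ w, w = Real.sqrt (c2 * M / 64) := ⟨_, rfl⟩
  have hw1 : 1 ≤ w := by
    rw [hw, Real.one_le_sqrt, le_div_iff₀ (by norm_num)]
    rw [div_le_iff₀ hc20] at hM1; linarith
  have hrt : c2 * M ≤ r / t := by
    calc c2 * M ≤ c2 * (s / l) := mul_le_mul_of_nonneg_left hsl hc20.le
      _ = (c1 * s / 2) / (D * l) := by rw [hc2]; field_simp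
      _ ≤ r / t := by apply div_le_div₀ (by linarith) hrge (by linarith) htl
  obtain ⟨j, hj⟩ : ∃ j : ℕ, j = ⌊Real.sqrt (r / (16 * t))⌋₊ := ⟨_, rfl⟩
  have hjw : w ≤ j := by
    have h1 : 2 * w ≤ Real.sqrt (r / (16 * t)) := by
      apply Real.le_sqrt_of_sq_le
      rw [mul_pow, hw, Real.sq_sqrt (by positivity)]
      have : (r:ℝ) / (16 * t) = r / t / 16 := by field_simp
      rw [this]; linarith
    have := Nat.lt_floor_add_one (Real.sqrt (r / (16 * t)))
    rw [← hj] at this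
    linarith
  have hj1 : 1 ≤ j := by exact_mod_cast hw1.trans hjw
  have hjr : 16 * t * j ^ 2 ≤ r := by
    have h1 : (j:ℝ) ≤ Real.sqrt (r / (16 * t)) := by rw [hj]; exact Nat.floor_le (by positivity)
    have h2 : (j:ℝ)^2 ≤ r / (16 * t) := by
      rw [← Real.sq_sqrt (show (0:ℝ) ≤ r / (16 * t) by positivity)]
      exact pow_le_pow_left₀ (by positivity) h1 2
    rw [le_div_iff₀ (by positivity)] at h2
    have h3 : (16:ℝ) * t * j^2 ≤ r := by linarith
    exact_mod_cast h3
  obtain ⟨X, hX1, hX2, hX3⟩ := hX U hUt j hj1 hjr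
  refine ⟨X, hX1, hX2, le_trans (mul_le_mul_of_nonneg_left ?_ hk0.le) hX3⟩
  have e1 : Real.log 2 * Real.sqrt (c2 / 64) * Real.sqrt M = Real.log 2 * w := by
    rw [mul_assoc, ← Real.sqrt_mul (by positivity), hw]; congr 2; ring
  rw [e1]
  calc Real.exp (Real.log 2 * w) ≤ Real.exp (Real.log 2 * j) :=
        Real.exp_le_exp.mpr (mul_le_mul_of_nonneg_left hjw hl2.le)
    _ = 2 ^ j := by rw [mul_comm, Real.exp_nat_mul, Real.exp_log (by norm_num)]
    _ ≤ 4 ^ j / 2 := by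
        have h4 : (4:ℝ)^j = 2^j * 2^j := by rw [← mul_pow]; norm_num
        have h2 : (2:ℝ)^1 ≤ 2^j := pow_le_pow_right₀ (by norm_num) hj1
        rw [h4]; nlinarith
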